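/- arXiv:2412.16109 — 2 statements merged into one kernel-verified Lean document; each statement's English description precedes it below -/
import Mathlib

section
/- Assume the domain, weight, localization and mollifier setting below with d ≥ 1, p ∈ (1,∞), and β ∈ ℝ. Then there exists a constant C₂, depending only on d, p, β, ψ, κ₀ and κ₁, such that for every δ ∈ (0, 1/(3κ₀²κ₁)) and every measurable u : Ω → ℝ with ∫_Ω |u(x)|^p γ(x)^{−β} dx < ∞ and [u]_{𝔚^p[δ](Ω;β)} < ∞, one has ( ∫_Ω |K_δ u(x) − u(x)|^p γ(x)^{−(β+p)} dx )^{1/p} ≤ C₂ · δ · [u]_{𝔚^p[δ](Ω;β)}. -/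
/-!
The argument is pointwise in `x`, followed by a chaining estimate.

Removing the finite set `Γ` from the open set `Ω*` puts `Γ` on the boundary of `Ω`
(`subset_frontier_diff`; this needs `d ≥ 1`), hence `η ≤ dist(·, Γ) ≤ κ₀ γ`. The kernel of `K_δ` has
unit mass and is supported in `B(x, δ λ(x)) ⊆ B(x, κ₀ δ η(x)) ⊆ Ω`, so Hölder's inequality bounds
`|K_δ u(x) - u(x)| ^ p` by a constant times the average of `|u(y) - u(x)| ^ p` over
`B(x, δ λ(x))` (`enorm_conv_sub_rpow_le`). Since `γ ^ (-p) ≤ (κ₀ / η) ^ p = (κ₀ δ) ^ p (δ η) ^ (-p)`,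
integrating against `γ ^ (-(β + p))` gives `δ ^ p` times the nonlocal energy, except that the inner
integral runs over `B(x, κ₀ δ η(x))` instead of `B(x, δ η(x))`.

The horizon is reduced in `lintegral_horizon_le`. The increment `u(x + h) - u(x)` telescopes into
`N ≥ 2 κ₀` increments of step `h / N`. The bound `δ < 1 / (3 κ₀² κ₁)` makes `η` and `γ` vary by a
factor at most `2` along the segment, so each increment is admissible for the horizon `δ η` at its
own base point. The substitution `(x, h) ↦ (x + (i / N) h, h / N)` has constant Jacobian, and each
term becomes a multiple of the original energy. All integrals are Lebesgue integrals in `ℝ≥0∞`, so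
integrability of `u` against the kernel has to be discussed only where the pointwise bound is finite.
-/

open MeasureTheory Metric Set Filter
open scoped ENNReal NNReal Topology

noncomputable section

/-- Euclidean space `ℝ^d`. -/
abbrev Euc (d : ℕ) : Type := EuclideanSpace ℝ (Fin d)

/-- The constant `C̄_{d,p} = √π Γ((d+p)/2) / (Γ((p+1)/2) Γ(d/2))`. -/
def Cbar (d : ℕ) (p : ℝ) : ℝ :=
  Real.sqrt Real.pi * Real.Gamma (((d : ℝ) + p) / 2) /
    (Real.Gamma ((p + 1) / 2) * Real.Gamma ((d : ℝ) / 2))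

/-- The surface measure `σ(𝕊^{d-1}) = 2 π^{d/2} / Γ(d/2)` of the unit sphere in `ℝ^d`. -/
def sphArea (d : ℕ) : ℝ := 2 * Real.pi ^ ((d : ℝ) / 2) / Real.Gamma ((d : ℝ) / 2)

/-- The normalizing constant `C̄_{d,p} (d+p) / σ(𝕊^{d-1})` of the nonlocal seminorm. -/
def normC (d : ℕ) (p : ℝ) : ℝ := Cbar d p * ((d : ℝ) + p) / sphArea d

/-- The distance `η(x) = dist(x, ∂Ω)` to the boundary of `Ω`. -/
def etaD {d : ℕ} (Ω : Set (Euc d)) (x : Euc d) : ℝ := Metric.infDist x (frontier Ω)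

/-- The `p`-th power `[u]_{𝔚^p[δ](Ω;β)}^p` of the weighted nonlocal seminorm. -/
def nlEnergy (d : ℕ) (Ω : Set (Euc d)) (γ : Euc d → ℝ) (p β δ : ℝ) (u : Euc d → ℝ) : ℝ≥0∞ :=
  ENNReal.ofReal (normC d p) *
    ∫⁻ x in Ω, ∫⁻ y in ball x (δ * etaD Ω x),
      ENNReal.ofReal (γ x ^ (-β) * |u y - u x| ^ p / (δ * etaD Ω x) ^ ((d : ℝ) + p))

/-- The weighted nonlocal seminorm `[u]_{𝔚^p[δ](Ω;β)}`. -/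
def semiW (d : ℕ) (Ω : Set (Euc d)) (γ : Euc d → ℝ) (p β δ : ℝ) (u : Euc d → ℝ) : ℝ≥0∞ :=
  nlEnergy d Ω γ p β δ u ^ (1 / p)


/-- The boundary-localized convolution
`K_δ u(x) := ∫_Ω λ_δ(x)^{-d} ψ(|y-x|/λ_δ(x)) u(y) dy`, where `λ_δ(x) = δ·λ(x)`. -/
def Kconv (d : ℕ) (Ω : Set (Euc d)) (lam : Euc d → ℝ) (ψ : ℝ → ℝ) (δ : ℝ)
    (u : Euc d → ℝ) (x : Euc d) : ℝ :=
  ∫ y in Ω, ψ (‖y - x‖ / (δ * lam x)) / (δ * lam x) ^ d * u y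

/-! ### Horizon reduction -/

/-- The integrand of the nonlocal energy in the variables `(x, h)`, `h = y - x`, extended by zero
off `{x ∈ Ω, ‖h‖ < r x}`. -/
def pairEnergy {d : ℕ} (Ω : Set (Euc d)) (a : Euc d → ℝ≥0∞) (u : Euc d → ℝ) (p : ℝ)
    (r : Euc d → ℝ) : Euc d × Euc d → ℝ≥0∞ :=
  indicator {q | q.1 ∈ Ω ∧ ‖q.2‖ < r q.1} (fun q => a q.1 * ‖u (q.1 + q.2) - u q.1‖ₑ ^ p)

lemma measurable_pairEnergy {d : ℕ} {Ω : Set (Euc d)} (hΩ : MeasurableSet Ω)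
    {a : Euc d → ℝ≥0∞} (ha : Measurable a) {u : Euc d → ℝ} (hu : Measurable u) (p : ℝ)
    {r : Euc d → ℝ} (hr : Measurable r) : Measurable (pairEnergy Ω a u p r) := by
  refine Measurable.indicator ?_ ?_
  · fun_prop
  · exact (measurable_fst hΩ).inter
      (measurableSet_lt measurable_snd.norm (hr.comp measurable_fst))

lemma lintegral_ball_eq_pairEnergy {d : ℕ} {Ω : Set (Euc d)} (hΩ : MeasurableSet Ω)
    (a : Euc d → ℝ≥0∞) (u : Euc d → ℝ) (p : ℝ) (r : Euc d → ℝ) :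
    ∫⁻ x in Ω, ∫⁻ y in ball x (r x), a x * ‖u y - u x‖ₑ ^ p =
      ∫⁻ x, ∫⁻ h, pairEnergy Ω a u p r (x, h) := by
  rw [← lintegral_indicator hΩ]
  refine lintegral_congr fun x => ?_
  by_cases hx : x ∈ Ω
  · rw [indicator_of_mem hx, ← lintegral_indicator measurableSet_ball,
      ← lintegral_add_left_eq_self _ x]
    refine lintegral_congr fun h => ?_
    by_cases hh : ‖h‖ < r x <;> simp [pairEnergy, indicator, hx, hh]
  · simp [pairEnergy, indicator, hx]

/-- Change of variables `(x, h) ↦ (x + s h, h / N)`: its Jacobian is `N ^ (-d)`. -/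
lemma lintegral_shear_scale {d : ℕ} {Φ : Euc d × Euc d → ℝ≥0∞} (hΦ : Measurable Φ) (s : ℝ)
    {N : ℝ} (hN : 0 < N) :
    ∫⁻ x, ∫⁻ h, Φ (x + s • h, N⁻¹ • h) = ENNReal.ofReal (N ^ d) * ∫⁻ x, ∫⁻ h, Φ (x, h) := by
  have h1 : ∫⁻ x, ∫⁻ h, Φ (x + s • h, N⁻¹ • h) = ∫⁻ h, ∫⁻ x, Φ (x, N⁻¹ • h) := by
    rw [lintegral_lintegral_swap]
    · refine lintegral_congr fun h => ?_
      exact lintegral_add_right_eq_self (fun x => Φ (x, N⁻¹ • h)) (s • h)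
    · exact (hΦ.comp (by fun_prop)).aemeasurable
  have h2 : Measurable fun h => ∫⁻ x, Φ (x, h) := hΦ.lintegral_prod_left'
  rw [h1, lintegral_lintegral_swap (f := fun x h => Φ (x, h)) hΦ.aemeasurable,
    ← lintegral_map (f := fun h => ∫⁻ x, Φ (x, h)) (g := (N⁻¹ • · : Euc d → Euc d)) h2
      (measurable_const_smul _), Measure.map_addHaar_smul _ (inv_ne_zero hN.ne'),
    lintegral_smul_measure, finrank_euclideanSpace_fin, inv_pow, inv_inv,
    abs_of_pos (pow_pos hN d), smul_eq_mul]

/-- Telescoping along the segment from `x` to `x + h`, cut into `N` equal steps. -/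
lemma pairEnergy_le_sum {d : ℕ} {Ω : Set (Euc d)} {a : Euc d → ℝ≥0∞} {u : Euc d → ℝ} {p κ : ℝ}
    (hp : 1 ≤ p) {ρ : Euc d → ℝ} {c : ℝ≥0∞} {N : ℕ} (hN : 0 < N)
    (hseg : ∀ x ∈ Ω, ∀ h : Euc d, ‖h‖ < κ * ρ x → ∀ t ∈ Icc (0 : ℝ) 1,
      x + t • h ∈ Ω ∧ a x ≤ c * a (x + t • h) ∧ κ * ρ x ≤ N * ρ (x + t • h))
    (x h : Euc d) :
    pairEnergy Ω a u p (fun x => κ * ρ x) (x, h) ≤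
      (N : ℝ≥0∞) ^ (p - 1) * c * ∑ i ∈ Finset.range N,
        pairEnergy Ω a u p ρ (x + ((i : ℝ) / N) • h, (N : ℝ)⁻¹ • h) := by
  have hN' : (0 : ℝ) < N := by exact_mod_cast hN
  by_cases hm : x ∈ Ω ∧ ‖h‖ < κ * ρ x
  swap
  · simp [pairEnergy, indicator, hm]
  have hstep : ∀ i ∈ Finset.range N,
      a x * ‖u (x + (((i + 1 : ℕ) : ℝ) / N) • h) - u (x + ((i : ℝ) / N) • h)‖ₑ ^ p ≤
        c * pairEnergy Ω a u p ρ (x + ((i : ℝ) / N) • h, (N : ℝ)⁻¹ • h) := by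
    intro i hi
    have hi' : (i : ℝ) ≤ N := by exact_mod_cast (Finset.mem_range.1 hi).le
    obtain ⟨h1, h2, h3⟩ := hseg x hm.1 h hm.2 ((i : ℝ) / N)
      ⟨by positivity, (div_le_one hN').2 hi'⟩
    have h4 : ‖(N : ℝ)⁻¹ • h‖ < ρ (x + ((i : ℝ) / N) • h) := by
      rw [norm_smul, norm_inv, Real.norm_of_nonneg hN'.le, inv_mul_lt_iff₀ hN']
      exact hm.2.trans_le h3
    have h5 : x + ((i : ℝ) / N) • h + (N : ℝ)⁻¹ • h = x + (((i + 1 : ℕ) : ℝ) / N) • h := by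
      rw [add_assoc, ← add_smul]
      congr 2
      push_cast
      ring
    have h6 : ((x + ((i : ℝ) / N) • h, (N : ℝ)⁻¹ • h) : Euc d × Euc d) ∈
        {q : Euc d × Euc d | q.1 ∈ Ω ∧ ‖q.2‖ < ρ q.1} := ⟨h1, h4⟩
    rw [pairEnergy, indicator_of_mem h6]
    simp only [h5]
    rw [← mul_assoc]
    gcongr
  have htel : u (x + h) - u x = ∑ i ∈ Finset.range N,
      (u (x + (((i + 1 : ℕ) : ℝ) / N) • h) - u (x + ((i : ℝ) / N) • h)) := by
    rw [Finset.sum_range_sub (fun i : ℕ => u (x + ((i : ℝ) / N) • h))]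
    simp [hN'.ne']
  have hm' : ((x, h) : Euc d × Euc d) ∈
      {q : Euc d × Euc d | q.1 ∈ Ω ∧ ‖q.2‖ < κ * ρ q.1} := hm
  rw [pairEnergy, indicator_of_mem hm']
  calc a x * ‖u (x + h) - u x‖ₑ ^ p
      ≤ a x * ((N : ℝ≥0∞) ^ (p - 1) * ∑ i ∈ Finset.range N,
          ‖u (x + (((i + 1 : ℕ) : ℝ) / N) • h) - u (x + ((i : ℝ) / N) • h)‖ₑ ^ p) := by
        gcongr
        rw [htel]
        refine (ENNReal.rpow_le_rpow (enorm_sum_le _ _) (by linarith)).trans ?_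
        simpa using ENNReal.rpow_sum_le_const_mul_sum_rpow (Finset.range N)
          (fun i : ℕ => ‖u (x + (((i + 1 : ℕ) : ℝ) / N) • h) - u (x + ((i : ℝ) / N) • h)‖ₑ) hp
    _ = (N : ℝ≥0∞) ^ (p - 1) * ∑ i ∈ Finset.range N, a x *
          ‖u (x + (((i + 1 : ℕ) : ℝ) / N) • h) - u (x + ((i : ℝ) / N) • h)‖ₑ ^ p := by
        rw [← Finset.mul_sum, mul_left_comm]
    _ ≤ _ := by
        rw [mul_assoc, Finset.mul_sum _ _ c]
        exact mul_le_mul' le_rfl (Finset.sum_le_sum hstep)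

/-- Reducing the horizon: if the weight and the radius are comparable along segments of length at
most `κ ρ`, the energy with horizon `κ ρ` is controlled by the energy with horizon `ρ`. -/
lemma lintegral_horizon_le {d : ℕ} {Ω : Set (Euc d)} (hΩ : MeasurableSet Ω)
    {a : Euc d → ℝ≥0∞} (ha : Measurable a) {u : Euc d → ℝ} (hu : Measurable u) {p κ : ℝ}
    (hp : 1 ≤ p) {ρ : Euc d → ℝ} (hρ : Measurable ρ) {c : ℝ≥0∞} {N : ℕ} (hN : 0 < N)
    (hseg : ∀ x ∈ Ω, ∀ h : Euc d, ‖h‖ < κ * ρ x → ∀ t ∈ Icc (0 : ℝ) 1,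
      x + t • h ∈ Ω ∧ a x ≤ c * a (x + t • h) ∧ κ * ρ x ≤ N * ρ (x + t • h)) :
    ∫⁻ x in Ω, ∫⁻ y in ball x (κ * ρ x), a x * ‖u y - u x‖ₑ ^ p ≤
      (N : ℝ≥0∞) ^ (p - 1) * c * (N * ENNReal.ofReal ((N : ℝ) ^ d)) *
        ∫⁻ x in Ω, ∫⁻ y in ball x (ρ x), a x * ‖u y - u x‖ₑ ^ p := by
  have hN' : (0 : ℝ) < N := by exact_mod_cast hN
  have hΦ := measurable_pairEnergy hΩ ha hu p hρ
  rw [lintegral_ball_eq_pairEnergy hΩ a u p (fun x => κ * ρ x),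
    lintegral_ball_eq_pairEnergy hΩ a u p ρ]
  have hmi : ∀ i : ℕ, Measurable fun q : Euc d × Euc d =>
      pairEnergy Ω a u p ρ (q.1 + ((i : ℝ) / N) • q.2, (N : ℝ)⁻¹ • q.2) :=
    fun i => hΦ.comp (by fun_prop)
  calc ∫⁻ x, ∫⁻ h, pairEnergy Ω a u p (fun x => κ * ρ x) (x, h)
      ≤ ∫⁻ x, ∫⁻ h, (N : ℝ≥0∞) ^ (p - 1) * c * ∑ i ∈ Finset.range N,
        pairEnergy Ω a u p ρ (x + ((i : ℝ) / N) • h, (N : ℝ)⁻¹ • h) :=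
        lintegral_mono fun x => lintegral_mono fun h => pairEnergy_le_sum hp hN hseg x h
    _ = (N : ℝ≥0∞) ^ (p - 1) * c * ∑ i ∈ Finset.range N, ∫⁻ x, ∫⁻ h,
        pairEnergy Ω a u p ρ (x + ((i : ℝ) / N) • h, (N : ℝ)⁻¹ • h) := by
        have h1 : ∀ x, ∫⁻ h, (N : ℝ≥0∞) ^ (p - 1) * c * ∑ i ∈ Finset.range N,
            pairEnergy Ω a u p ρ (x + ((i : ℝ) / N) • h, (N : ℝ)⁻¹ • h) =
            (N : ℝ≥0∞) ^ (p - 1) * c * ∑ i ∈ Finset.range N, ∫⁻ h,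
            pairEnergy Ω a u p ρ (x + ((i : ℝ) / N) • h, (N : ℝ)⁻¹ • h) := by
          intro x
          have hm : ∀ i : ℕ, Measurable fun h =>
              pairEnergy Ω a u p ρ (x + ((i : ℝ) / N) • h, (N : ℝ)⁻¹ • h) :=
            fun i => (hmi i).comp measurable_prodMk_left
          rw [lintegral_const_mul _ (Finset.measurable_fun_sum _ fun i _ => hm i),
            lintegral_finsetSum _ fun i _ => hm i]
        have hm2 : ∀ i : ℕ, Measurable fun x => ∫⁻ h,
            pairEnergy Ω a u p ρ (x + ((i : ℝ) / N) • h, (N : ℝ)⁻¹ • h) :=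
          fun i => (hmi i).lintegral_prod_right'
        simp_rw [h1]
        rw [lintegral_const_mul _ (Finset.measurable_fun_sum _ fun i _ => hm2 i),
          lintegral_finsetSum _ fun i _ => hm2 i]
    _ = _ := by
        simp_rw [lintegral_shear_scale hΦ _ hN']
        rw [Finset.sum_const, Finset.card_range, nsmul_eq_mul]
        ring

/-! ### The pointwise bound -/

lemma integral_scaled_kernel {d : ℕ} {ψ : ℝ → ℝ} (hψnorm : ∫ x : Euc d, ψ ‖x‖ = 1)
    (x : Euc d) {r : ℝ} (hr : 0 < r) : ∫ y : Euc d, ψ (‖y - x‖ / r) / r ^ d = 1 := by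
  have h1 : ∀ z : Euc d, ψ (‖z‖ / r) / r ^ d = (r ^ d)⁻¹ * ψ ‖r⁻¹ • z‖ := by
    intro z
    rw [norm_smul, norm_inv, Real.norm_of_nonneg hr.le, div_eq_inv_mul, div_eq_inv_mul]
  rw [integral_sub_right_eq_self (fun z : Euc d => ψ (‖z‖ / r) / r ^ d) x]
  simp_rw [h1]
  rw [integral_const_mul, Measure.integral_comp_smul volume (fun z : Euc d => ψ ‖z‖), hψnorm,
    finrank_euclideanSpace_fin, inv_pow, inv_inv, abs_of_pos (pow_pos hr d), smul_eq_mul, mul_one,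
    inv_mul_cancel₀ (pow_pos hr d).ne']

lemma rpow_lintegral_le {α : Type*} [MeasurableSpace α] (μ : Measure α) {p : ℝ} (hp : 1 < p)
    {f : α → ℝ≥0∞} (hf : AEMeasurable f μ) :
    (∫⁻ y, f y ∂μ) ^ p ≤ (∫⁻ y, f y ^ p ∂μ) * μ univ ^ (p - 1) := by
  have hpq := Real.HolderConjugate.conjExponent hp
  have hp0 : 0 < p := by linarith
  have h := ENNReal.lintegral_mul_le_Lp_mul_Lq μ hpq hf (aemeasurable_const (b := (1 : ℝ≥0∞)))
  simp only [Pi.mul_apply, mul_one, ENNReal.one_rpow, lintegral_const, one_mul] at h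
  refine (ENNReal.rpow_le_rpow h hp0.le).trans_eq ?_
  rw [ENNReal.mul_rpow_of_nonneg _ _ hp0.le, ← ENNReal.rpow_mul, ← ENNReal.rpow_mul,
    one_div_mul_cancel hp0.ne', ENNReal.rpow_one]
  congr 2
  rw [Real.conjExponent]
  have : p - 1 ≠ 0 := by linarith
  field_simp

/-- Pointwise Jensen-type bound. Since the kernel has unit mass, the left side is the `p`-th power
of an average of `u y - u x`; no integrability of `u` is needed, as otherwise the right side is
infinite. -/
lemma enorm_conv_sub_rpow_le {d : ℕ} {p : ℝ} (hp : 1 < p) {ψ : ℝ → ℝ} (hψnn : ∀ x, 0 ≤ ψ x)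
    (hψmeas : Measurable ψ) {M : ℝ} (hM : 0 < M) (hψM : ∀ x, ψ x ≤ M)
    (hψsupp : ∀ x : ℝ, 1 ≤ |x| → ψ x = 0) (hψnorm : ∫ x : Euc d, ψ ‖x‖ = 1)
    {Ω : Set (Euc d)} {u : Euc d → ℝ} (hu : Measurable u) {x : Euc d} {r : ℝ} (hr : 0 < r)
    (hsub : ball x r ⊆ Ω) :
    ‖(∫ y in Ω, ψ (‖y - x‖ / r) / r ^ d * u y) - u x‖ₑ ^ p ≤
      ENNReal.ofReal M ^ p * volume (ball (0 : Euc d) 1) ^ (p - 1) * (ENNReal.ofReal (r ^ d))⁻¹ *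
        ∫⁻ y in ball x r, ‖u y - u x‖ₑ ^ p := by
  have hp0 : 0 < p := by linarith
  have hrd : 0 < r ^ d := pow_pos hr d
  set k : Euc d → ℝ := fun y => ψ (‖y - x‖ / r) / r ^ d with hk
  have hkm : Measurable k := (hψmeas.comp (by fun_prop)).div_const _
  have hk1 : ∫ y, k y = 1 := integral_scaled_kernel hψnorm x hr
  have hki : Integrable k := by
    by_contra h
    rw [integral_undef h] at hk1
    exact zero_ne_one hk1
  have hk0 : ∀ y, y ∉ ball x r → k y = 0 := by
    intro y hy
    have : 1 ≤ |‖y - x‖ / r| := by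
      rw [abs_of_nonneg (by positivity), one_le_div hr]
      simpa [mem_ball, dist_eq_norm] using hy
    simp [hk, hψsupp _ this]
  have hkle : ∀ y, ‖k y‖ₑ ≤ ENNReal.ofReal (M / r ^ d) := by
    intro y
    rw [Real.enorm_of_nonneg (div_nonneg (hψnn _) hrd.le)]
    exact ENNReal.ofReal_le_ofReal (div_le_div_of_nonneg_right (hψM _) hrd.le)
  have hω0 : volume (ball (0 : Euc d) 1) ≠ 0 := (measure_ball_pos volume 0 one_pos).ne'
  have hωt : volume (ball (0 : Euc d) 1) ≠ ⊤ := measure_ball_lt_top.ne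
  have hvm : Measurable fun y => ‖u y - u x‖ₑ := by fun_prop
  set J := ∫⁻ y in ball x r, ‖u y - u x‖ₑ with hJ
  set V := ∫⁻ y in ball x r, ‖u y - u x‖ₑ ^ p with hV
  set R := ENNReal.ofReal (r ^ d) with hR
  have hR0 : R ≠ 0 := by simpa [hR] using hrd
  have hRt : R ≠ ⊤ := ENNReal.ofReal_ne_top
  set ω := volume (ball (0 : Euc d) 1) with hω
  have hvol : volume (ball x r) = R * ω := by
    rw [Measure.addHaar_ball_of_pos _ _ hr, finrank_euclideanSpace_fin]
  have hJV : J ^ p ≤ V * (R * ω) ^ (p - 1) := by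
    have := rpow_lintegral_le (volume.restrict (ball x r)) hp hvm.aemeasurable
    rwa [Measure.restrict_apply_univ, hvol] at this
  by_cases hVt : V = ⊤
  · rw [hVt, ENNReal.mul_top]
    · exact le_top
    · refine mul_ne_zero (mul_ne_zero ?_ ?_) (ENNReal.inv_ne_zero.2 hRt)
      · exact (ENNReal.rpow_pos (by simpa using hM) ENNReal.ofReal_ne_top).ne'
      · exact (ENNReal.rpow_pos (pos_iff_ne_zero.2 hω0) hωt).ne'
  have hJt : J ≠ ⊤ := by
    intro h
    rw [h, ENNReal.top_rpow_of_pos hp0, top_le_iff] at hJV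
    exact ENNReal.mul_ne_top hVt
      (ENNReal.rpow_ne_top_of_nonneg (by linarith) (ENNReal.mul_ne_top hRt hωt)) hJV
  have hkv : ∫⁻ y, ‖k y * (u y - u x)‖ₑ ≤ ENNReal.ofReal (M / r ^ d) * J := by
    rw [hJ, ← lintegral_const_mul _ hvm, ← lintegral_indicator measurableSet_ball]
    refine lintegral_mono fun y => ?_
    by_cases hy : y ∈ ball x r
    · rw [indicator_of_mem hy, enorm_mul]
      exact mul_le_mul' (hkle y) le_rfl
    · simp [hk0 y hy]
  have hkvi : Integrable fun y => k y * (u y - u x) :=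
    ⟨(hkm.mul (hu.sub_const _)).aestronglyMeasurable,
      hkv.trans_lt (ENNReal.mul_lt_top ENNReal.ofReal_lt_top hJt.lt_top)⟩
  have hid : (∫ y in Ω, k y * u y) - u x = ∫ y, k y * (u y - u x) := by
    rw [setIntegral_eq_integral_of_forall_compl_eq_zero
      (fun y hy => by rw [hk0 y fun h => hy (hsub h), zero_mul])]
    have h2 : ∫ y, k y * u y = ∫ y, (k y * (u y - u x) + k y * u x) := by
      congr 1
      ext y
      ring
    rw [h2, integral_add hkvi (hki.mul_const _), integral_mul_const, hk1]
    ring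
  change ‖(∫ y in Ω, k y * u y) - u x‖ₑ ^ p ≤ _
  rw [hid]
  calc ‖∫ y, k y * (u y - u x)‖ₑ ^ p
      ≤ (ENNReal.ofReal (M / r ^ d) * J) ^ p :=
        ENNReal.rpow_le_rpow ((enorm_integral_le_lintegral_enorm _).trans hkv) hp0.le
    _ ≤ (ENNReal.ofReal M * R⁻¹) ^ p * (V * (R * ω) ^ (p - 1)) := by
        rw [ENNReal.mul_rpow_of_nonneg _ _ hp0.le, ENNReal.ofReal_div_of_pos hrd, div_eq_mul_inv]
        gcongr
    _ = ENNReal.ofReal M ^ p * ω ^ (p - 1) * R⁻¹ * V := by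
        have h3 : R⁻¹ ^ p * R ^ (p - 1) = R⁻¹ := by
          rw [← ENNReal.rpow_neg_one, ← ENNReal.rpow_mul, ← ENNReal.rpow_add _ _ hR0 hRt]
          congr 1
          ring
        rw [ENNReal.mul_rpow_of_nonneg _ _ hp0.le,
          ENNReal.mul_rpow_of_nonneg _ _ (by linarith : 0 ≤ p - 1)]
        calc _ = ENNReal.ofReal M ^ p * ω ^ (p - 1) * (R⁻¹ ^ p * R ^ (p - 1)) * V := by ring
          _ = _ := by rw [h3]

/-! ### Geometry of the punctured domain and constants -/

lemma subset_frontier_diff {d : ℕ} (hd : 1 ≤ d) {Ωs Γ : Set (Euc d)} (hΩs : IsOpen Ωs)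
    (hΓ : Γ.Finite) (hsub : Γ ⊆ closure Ωs) : Γ ⊆ frontier (Ωs \ Γ) := by
  have hopen : IsOpen (Ωs \ Γ) := hΩs.sdiff hΓ.isClosed
  have : Nonempty (Fin d) := ⟨⟨0, hd⟩⟩
  have : Nontrivial (Euc d) := inferInstance
  have : ∀ x : Euc d, (𝓝[≠] x).NeBot := fun x => Module.punctured_nhds_neBot ℝ (Euc d) x
  have hdense : Dense (univ \ Γ) := dense_univ.sdiff_finite hΓ
  intro x hx
  rw [hopen.frontier_eq]
  refine ⟨?_, fun h => h.2 hx⟩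
  have h1 : Ωs ⊆ closure (Ωs ∩ (univ \ Γ)) := hdense.open_subset_closure_inter hΩs
  have h2 : Ωs ∩ (univ \ Γ) = Ωs \ Γ := by ext; simp
  rw [h2] at h1
  exact closure_minimal h1 isClosed_closure (hsub hx)

/-- A ball is connected, so it cannot leave `Ω` without meeting the frontier. -/
lemma ball_infDist_frontier_subset {d : ℕ} {Ω : Set (Euc d)} (hΩ : IsOpen Ω) {x : Euc d}
    (hx : x ∈ Ω) :
    ball x (etaD Ω x) ⊆ Ω := by
  intro y hy
  by_contra hyΩ
  have hpc : IsPreconnected (ball x (etaD Ω x)) := (convex_ball x _).isPreconnected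
  have hpos : 0 < etaD Ω x := dist_nonneg.trans_lt (mem_ball.1 hy)
  have hnf : ∀ z ∈ ball x (etaD Ω x), z ∉ frontier Ω := by
    intro z hz hzf
    have h1 : etaD Ω x ≤ dist x z := infDist_le_dist_of_mem hzf
    rw [mem_ball, dist_comm] at hz
    exact absurd hz (not_lt.2 h1)
  have hcl : ∀ z ∈ ball x (etaD Ω x), z ∉ Ω → z ∈ (closure Ω)ᶜ := by
    intro z hz hzΩ hzc
    exact hnf z hz (by rw [hΩ.frontier_eq]; exact ⟨hzc, hzΩ⟩)
  obtain ⟨z, -, hz1, hz2⟩ := hpc Ω (closure Ω)ᶜ hΩ isClosed_closure.isOpen_compl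
    (fun z hz => or_iff_not_imp_left.2 (hcl z hz)) ⟨x, mem_ball_self hpos, hx⟩
    ⟨y, hy, hcl y hy hyΩ⟩
  exact hz2 (subset_closure hz1)

/-- Comparability of `s` and `t` up to a factor `2` passes to powers of either sign. -/
lemma rpow_le_two_rpow_mul {s t : ℝ} (hs : 0 < s) (ht : 0 < t) (h1 : s ≤ 2 * t) (h2 : t ≤ 2 * s)
    (e : ℝ) : s ^ e ≤ 2 ^ |e| * t ^ e := by
  rcases le_total 0 e with he | he
  · rw [abs_of_nonneg he, ← Real.mul_rpow (by norm_num) ht.le]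
    exact Real.rpow_le_rpow hs.le h1 he
  · rw [abs_of_nonpos he, Real.rpow_neg (by norm_num), ← Real.inv_rpow (by norm_num),
      ← Real.mul_rpow (by norm_num) ht.le]
    exact Real.rpow_le_rpow_of_nonpos (by positivity) (by linarith) he

lemma normC_pos {d : ℕ} (hd : 1 ≤ d) {p : ℝ} (hp : 0 < p) : 0 < normC d p := by
  have hd' : (0 : ℝ) < d := by exact_mod_cast hd
  have h1 := Real.Gamma_pos_of_pos (by positivity : 0 < ((d : ℝ) + p) / 2)
  have h2 := Real.Gamma_pos_of_pos (by positivity : 0 < (p + 1) / 2)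
  have h3 := Real.Gamma_pos_of_pos (by positivity : 0 < (d : ℝ) / 2)
  unfold normC Cbar sphArea
  positivity

/-! ### The weighted estimate -/

/-- **Weighted `L^p` distance between a function and its boundary-localized convolution.**
There is a constant `C₂` depending only on `d, p, β, ψ, κ₀, κ₁` such that for every
admissible setting, every `δ ∈ (0, 1/(3κ₀²κ₁))`, and every measurable `u` with
`∫_Ω |u|^p γ^{-β} < ∞` and `[u]_{𝔚^p[δ](Ω;β)} < ∞`,
`‖K_δ u - u‖_{L^p(Ω;β+p)} ≤ C₂ δ [u]_{𝔚^p[δ](Ω;β)}`. -/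
theorem stmt8 (d : ℕ) (hd : 1 ≤ d) (p β κ₀ κ₁ : ℝ) (hp : 1 < p)
    (hκ₀ : 1 ≤ κ₀) (hκ₁ : 1 ≤ κ₁)
    (ψ : ℝ → ℝ) (hψnn : ∀ x, 0 ≤ ψ x) (hψmeas : Measurable ψ)
    (hψbdd : ∃ M : ℝ, ∀ x, ψ x ≤ M) (hψeven : ∀ x, ψ (-x) = ψ x)
    (hψmono : AntitoneOn ψ (Set.Ici 0)) (hψsupp : ∀ x : ℝ, 1 ≤ |x| → ψ x = 0)
    (b cψ : ℝ) (hb : 0 < b) (hcψ : cψ ∈ Set.Ioo (0 : ℝ) 1)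
    (hψlb : ∀ x ∈ Set.Icc (0 : ℝ) cψ, b ≤ ψ x)
    (hψnorm : ∫ x : Euc d, ψ ‖x‖ = 1) :
    ∃ C₂ : ℝ, 0 < C₂ ∧
      ∀ (Ωstar Γ : Set (Euc d)), IsOpen Ωstar → Bornology.IsBounded Ωstar →
        Γ.Finite → Γ.Nonempty → Γ ⊆ closure Ωstar →
        ∀ γ lam : Euc d → ℝ,
          (∀ x ∈ Ωstar \ Γ, 0 < γ x) →
          LipschitzOnWith (Real.toNNReal κ₁) γ (Ωstar \ Γ) →
          (∀ x ∈ Ωstar \ Γ, Metric.infDist x Γ ≤ κ₀ * γ x) →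
          (∀ x ∈ Ωstar \ Γ, 0 < lam x ∧
            κ₀⁻¹ * etaD (Ωstar \ Γ) x ≤ lam x ∧ lam x ≤ κ₀ * etaD (Ωstar \ Γ) x) →
          (∀ x ∈ Ωstar \ Γ, ∀ y ∈ Ωstar \ Γ, |lam x - lam y| ≤ κ₁ * ‖x - y‖) →
          ∀ δ : ℝ, 0 < δ → δ < 1 / (3 * κ₀ ^ 2 * κ₁) →
          ∀ u : Euc d → ℝ, Measurable u →
            (∫⁻ x in Ωstar \ Γ, ENNReal.ofReal (|u x| ^ p * γ x ^ (-β))) < ⊤ →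
            semiW d (Ωstar \ Γ) γ p β δ u < ⊤ →
            (∫⁻ x in Ωstar \ Γ,
                ENNReal.ofReal
                  (|Kconv d (Ωstar \ Γ) lam ψ δ u x - u x| ^ p * γ x ^ (-(β + p)))) ^ (1 / p) ≤
              ENNReal.ofReal (C₂ * δ) * semiW d (Ωstar \ Γ) γ p β δ u := by
  have hp0 : 0 < p := by linarith
  have hκ₀0 : 0 < κ₀ := by linarith
  obtain ⟨M, hM0, hψM⟩ : ∃ M : ℝ, 0 < M ∧ ∀ x, ψ x ≤ M := by
    obtain ⟨M, hM⟩ := hψbdd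
    exact ⟨max M 1, by positivity, fun x => (hM x).trans (le_max_left _ _)⟩
  -- `N ≥ 2 κ₀` subdivision points bring the horizon `κ₀ δ η` below `δ η`.
  obtain ⟨N, hNκ⟩ := exists_nat_ge (2 * κ₀)
  have hN : 0 < N := by
    have : (0 : ℝ) < N := by linarith
    exact_mod_cast this
  set c : ℝ≥0∞ := ENNReal.ofReal (2 ^ |(-β)| * 2 ^ |(-((d : ℝ) + p))|) with hc
  -- `A` bounds the `p`-th powers: Jensen, the comparison of kernel scale and weight with `η`, and
  -- the horizon reduction contribute one factor each.
  set A : ℝ≥0∞ := ENNReal.ofReal M ^ p * volume (ball (0 : Euc d) 1) ^ (p - 1) *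
    ENNReal.ofReal (κ₀ ^ d * κ₀ ^ p) *
      ((N : ℝ≥0∞) ^ (p - 1) * c * (N * ENNReal.ofReal ((N : ℝ) ^ d))) with hA
  have hAt : A ≠ ⊤ := by
    have h1 : volume (ball (0 : Euc d) 1) ≠ ⊤ := measure_ball_lt_top.ne
    have h2 : (0 : ℝ) ≤ p - 1 := by linarith
    have h3 : (N : ℝ≥0∞) ^ (p - 1) ≠ ⊤ :=
      ENNReal.rpow_ne_top_of_nonneg h2 (ENNReal.natCast_ne_top N)
    exact ENNReal.mul_ne_top (ENNReal.mul_ne_top (ENNReal.mul_ne_top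
      (ENNReal.rpow_ne_top_of_nonneg hp0.le ENNReal.ofReal_ne_top)
      (ENNReal.rpow_ne_top_of_nonneg h2 h1)) ENNReal.ofReal_ne_top)
      (ENNReal.mul_ne_top (ENNReal.mul_ne_top h3 ENNReal.ofReal_ne_top)
      (ENNReal.mul_ne_top (ENNReal.natCast_ne_top N) ENNReal.ofReal_ne_top))
  set nC : ℝ≥0∞ := ENNReal.ofReal (normC d p) with hnC
  have hnC0 : nC ≠ 0 := by
    simpa [hnC] using normC_pos hd hp0
  have hnCt : nC ≠ ⊤ := ENNReal.ofReal_ne_top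
  have hBt : (A / nC) ^ (1 / p) ≠ ⊤ :=
    ENNReal.rpow_ne_top_of_nonneg (by positivity) (ENNReal.div_ne_top hAt hnC0)
  refine ⟨((A / nC) ^ (1 / p)).toReal + 1, by positivity, ?_⟩
  intro Ωs Γ hΩs _ hΓf hΓn hΓc γ lam hγpos hγlip hγΓ hlam _ δ hδ hδlt u hu _ _
  have hopen : IsOpen (Ωs \ Γ) := hΩs.sdiff hΓf.isClosed
  have hΓfr := subset_frontier_diff hd hΩs hΓf hΓc
  set Ω := Ωs \ Γ with hΩ
  have hmeas : MeasurableSet Ω := hopen.measurableSet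
  have hfrn : (frontier Ω).Nonempty := hΓn.mono hΓfr
  have hηpos : ∀ x ∈ Ω, 0 < etaD Ω x := by
    intro x hx
    refine (isClosed_frontier.notMem_iff_infDist_pos hfrn).1 ?_
    rw [hopen.frontier_eq]
    exact fun h => h.2 hx
  -- Points of `Γ` lie on `∂Ω`, so `η ≤ dist(·, Γ)`.
  have hηγ : ∀ x ∈ Ω, etaD Ω x ≤ κ₀ * γ x := fun x hx =>
    (infDist_le_infDist_of_subset hΓfr hΓn).trans (hγΓ x hx)
  have hηcont : Continuous (etaD Ω) := continuous_infDist_pt _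
  have hδκ : 3 * κ₀ ^ 2 * κ₁ * δ < 1 := by
    rw [lt_div_iff₀ (by positivity)] at hδlt
    linarith
  have hδκ3 : 3 * (κ₀ * δ) ≤ 1 := by
    have : κ₀ * 1 ≤ κ₀ * (κ₀ * κ₁) :=
      mul_le_mul_of_nonneg_left (one_le_mul_of_one_le_of_one_le hκ₀ hκ₁) hκ₀0.le
    nlinarith
  -- `γ` is unconstrained off `Ω`; a globally Lipschitz extension `g` makes the weight measurable.
  obtain ⟨g, hglip, hg⟩ := hγlip.extend_real
  set ρ : Euc d → ℝ := fun x => δ * etaD Ω x with hρ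
  have hρm : Measurable ρ := (hηcont.const_smul δ).measurable
  have hρpos : ∀ x ∈ Ω, 0 < ρ x := fun x hx => mul_pos hδ (hηpos x hx)
  set a : Euc d → ℝ≥0∞ := fun x => ENNReal.ofReal (g x ^ (-β) * ρ x ^ (-((d : ℝ) + p))) with ha
  have ham : Measurable a :=
    ((hglip.continuous.measurable.pow_const _).mul (hρm.pow_const _)).ennreal_ofReal
  -- Along segments shorter than `κ₀ δ η(x) ≤ η(x) / 3`, both `η` and `γ` vary by a factor at
  -- most `2`; the bound on `δ` is used here.
  have hseg : ∀ x ∈ Ω, ∀ h : Euc d, ‖h‖ < κ₀ * ρ x → ∀ t ∈ Icc (0 : ℝ) 1,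
      x + t • h ∈ Ω ∧ a x ≤ c * a (x + t • h) ∧ κ₀ * ρ x ≤ N * ρ (x + t • h) := by
    intro x hx h hh t ht
    set z := x + t • h with hz
    have hηx := hηpos x hx
    have hzx : dist z x ≤ κ₀ * δ * etaD Ω x := by
      rw [hz, dist_self_add_left, norm_smul, Real.norm_of_nonneg ht.1]
      have : t * ‖h‖ ≤ 1 * ‖h‖ := mul_le_mul_of_nonneg_right ht.2 (norm_nonneg h)
      simp only [hρ] at hh
      linarith
    have hzx3 : 3 * dist z x ≤ etaD Ω x := by
      have := mul_le_mul_of_nonneg_right hδκ3 hηx.le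
      linarith
    have hzΩ : z ∈ Ω := ball_infDist_frontier_subset hopen hx (by rw [mem_ball]; linarith)
    have hη1 : etaD Ω x ≤ etaD Ω z + dist x z := infDist_le_infDist_add_dist
    have hη2 : etaD Ω z ≤ etaD Ω x + dist z x := infDist_le_infDist_add_dist
    rw [dist_comm] at hη1
    have hγx := hγpos x hx
    have hγz := hγpos z hzΩ
    have hγd : |γ z - γ x| ≤ γ x / 3 := by
      have h1 := hγlip.dist_le_mul z hzΩ x hx
      rw [Real.dist_eq, Real.coe_toNNReal _ (by linarith)] at h1
      have h2 : κ₁ * dist z x ≤ κ₁ * (κ₀ * δ * (κ₀ * γ x)) := by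
        have := hηγ x hx
        gcongr
        exact hzx.trans (by gcongr)
      have h3 := mul_le_mul_of_nonneg_right hδκ.le hγx.le
      linarith
    obtain ⟨hγ1, hγ2⟩ := abs_le.1 hγd
    have hρx := hρpos x hx
    have hρz := hρpos z hzΩ
    have hρ1 : ρ x ≤ 2 * ρ z := by
      simp only [hρ]
      nlinarith
    have hρ2 : ρ z ≤ 2 * ρ x := by
      simp only [hρ]
      nlinarith
    refine ⟨hzΩ, ?_, ?_⟩
    · simp only [ha, hc]
      rw [← ENNReal.ofReal_mul (by positivity), ← hg hx, ← hg hzΩ]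
      refine ENNReal.ofReal_le_ofReal ?_
      have e1 := rpow_le_two_rpow_mul hγx hγz (by linarith) (by linarith) (-β)
      have e2 := rpow_le_two_rpow_mul hρx hρz hρ1 hρ2 (-((d : ℝ) + p))
      calc _ ≤ (2 ^ |(-β)| * γ z ^ (-β)) *
            (2 ^ |(-((d : ℝ) + p))| * ρ z ^ (-((d : ℝ) + p))) := by gcongr
        _ = _ := by ring
    · calc κ₀ * ρ x ≤ κ₀ * (2 * ρ z) := by gcongr
        _ = 2 * κ₀ * ρ z := by ring
        _ ≤ N * ρ z := by gcongr
  set I := ∫⁻ x in Ω, ∫⁻ y in ball x (ρ x), a x * ‖u y - u x‖ₑ ^ p with hI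
  have hhor := lintegral_horizon_le hmeas ham hu hp.le hρm hN hseg
  have hE : nlEnergy d Ω γ p β δ u = nC * I := by
    rw [nlEnergy, hI]
    congr 1
    refine setLIntegral_congr_fun hmeas fun x hx => lintegral_congr fun y => ?_
    have hρx := hρpos x hx
    have hγx := hγpos x hx
    rw [← Real.enorm_abs, Real.enorm_of_nonneg (abs_nonneg _),
      ENNReal.ofReal_rpow_of_nonneg (abs_nonneg _) hp0.le, ← ENNReal.ofReal_mul (by
        rw [← hg hx]; positivity), ← hg hx, Real.rpow_neg hρx.le]
    congr 1
    simp only [hρ]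
    ring
  have hpt : ∀ x ∈ Ω, ENNReal.ofReal
      (|Kconv d Ω lam ψ δ u x - u x| ^ p * γ x ^ (-(β + p))) ≤
      ENNReal.ofReal M ^ p * volume (ball (0 : Euc d) 1) ^ (p - 1) *
        ENNReal.ofReal (κ₀ ^ d * κ₀ ^ p) * ENNReal.ofReal δ ^ p *
        ∫⁻ y in ball x (κ₀ * ρ x), a x * ‖u y - u x‖ₑ ^ p := by
    intro x hx
    have hρx := hρpos x hx
    have hγx := hγpos x hx
    have hηx := hηpos x hx
    obtain ⟨hl0, hl1, hl2⟩ := hlam x hx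
    have hr : 0 < δ * lam x := mul_pos hδ hl0
    have hr1 : ρ x ≤ κ₀ * (δ * lam x) := by
      have h1 : etaD Ω x ≤ κ₀ * lam x := (inv_mul_le_iff₀ hκ₀0).1 hl1
      simp only [hρ]
      nlinarith
    have hr2 : δ * lam x ≤ κ₀ * ρ x := by
      simp only [hρ]
      nlinarith
    have hsub : ball x (δ * lam x) ⊆ Ω := by
      refine (ball_subset_ball ?_).trans (ball_infDist_frontier_subset hopen hx)
      have := mul_le_mul_of_nonneg_right hδκ3 hηx.le
      simp only [hρ] at hr2
      nlinarith
    have hB := enorm_conv_sub_rpow_le hp hψnn hψmeas hM0 hψM hψsupp hψnorm hu hr hsub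
    -- `λ ≥ η / κ₀` trades the kernel scale for `δ η`, and `γ ≥ η / κ₀` produces the factor `δ ^ p`.
    have hw : (ENNReal.ofReal ((δ * lam x) ^ d))⁻¹ * ENNReal.ofReal (γ x ^ (-(β + p))) ≤
        ENNReal.ofReal (κ₀ ^ d * κ₀ ^ p) * ENNReal.ofReal δ ^ p * a x := by
      simp only [ha]
      rw [ENNReal.ofReal_rpow_of_nonneg hδ.le hp0.le, ← ENNReal.ofReal_inv_of_pos (by positivity),
        ← ENNReal.ofReal_mul (by positivity), ← ENNReal.ofReal_mul (by positivity),
        ← ENNReal.ofReal_mul (by positivity), ← hg hx]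
      refine ENNReal.ofReal_le_ofReal ?_
      have e1 : ((δ * lam x) ^ d)⁻¹ ≤ κ₀ ^ d * (ρ x ^ d)⁻¹ := by
        rw [← div_eq_mul_inv, ← div_pow, ← inv_pow]
        refine pow_le_pow_left₀ (by positivity) ?_ d
        rw [le_div_iff₀ hρx, inv_mul_le_iff₀ hr]
        linarith
      have e2 : γ x ^ (-p) ≤ κ₀ ^ p * δ ^ p * ρ x ^ (-p) := by
        rw [Real.rpow_neg hγx.le, Real.rpow_neg hρx.le, ← Real.inv_rpow hγx.le,
          ← Real.inv_rpow hρx.le, ← Real.mul_rpow hκ₀0.le hδ.le,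
          ← Real.mul_rpow (by positivity) (by positivity)]
        refine Real.rpow_le_rpow (by positivity) ?_ hp0.le
        rw [← div_eq_mul_inv, le_div_iff₀ hρx, inv_mul_le_iff₀ hγx]
        have := hηγ x hx
        simp only [hρ]
        nlinarith
      rw [neg_add, neg_add, Real.rpow_add hγx, Real.rpow_add hρx, Real.rpow_neg hρx.le (d : ℝ),
        Real.rpow_natCast]
      calc ((δ * lam x) ^ d)⁻¹ * (γ x ^ (-β) * γ x ^ (-p))
          ≤ (κ₀ ^ d * (ρ x ^ d)⁻¹) * (γ x ^ (-β) * (κ₀ ^ p * δ ^ p * ρ x ^ (-p))) := by gcongr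
        _ = _ := by ring
    have hK : Kconv d Ω lam ψ δ u x =
        ∫ y in Ω, ψ (‖y - x‖ / (δ * lam x)) / (δ * lam x) ^ d * u y := rfl
    rw [← hK] at hB
    rw [ENNReal.ofReal_mul (by positivity), ← ENNReal.ofReal_rpow_of_nonneg (abs_nonneg _) hp0.le,
      ← Real.enorm_of_nonneg (abs_nonneg _), Real.enorm_abs]
    set D := ∫⁻ y in ball x (δ * lam x), ‖u y - u x‖ₑ ^ p with hD
    have hDle : a x * D ≤ ∫⁻ y in ball x (κ₀ * ρ x), a x * ‖u y - u x‖ₑ ^ p := by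
      rw [lintegral_const_mul _ (by fun_prop)]
      exact mul_le_mul' le_rfl (lintegral_mono_set (ball_subset_ball hr2))
    calc _ ≤ ENNReal.ofReal M ^ p * volume (ball (0 : Euc d) 1) ^ (p - 1) *
          (ENNReal.ofReal ((δ * lam x) ^ d))⁻¹ * D * ENNReal.ofReal (γ x ^ (-(β + p))) :=
          mul_le_mul' hB le_rfl
      _ = ENNReal.ofReal M ^ p * volume (ball (0 : Euc d) 1) ^ (p - 1) * D *
          ((ENNReal.ofReal ((δ * lam x) ^ d))⁻¹ * ENNReal.ofReal (γ x ^ (-(β + p)))) := by ring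
      _ ≤ ENNReal.ofReal M ^ p * volume (ball (0 : Euc d) 1) ^ (p - 1) * D *
          (ENNReal.ofReal (κ₀ ^ d * κ₀ ^ p) * ENNReal.ofReal δ ^ p * a x) :=
          mul_le_mul' le_rfl hw
      _ = ENNReal.ofReal M ^ p * volume (ball (0 : Euc d) 1) ^ (p - 1) *
          ENNReal.ofReal (κ₀ ^ d * κ₀ ^ p) * ENNReal.ofReal δ ^ p * (a x * D) := by ring
      _ ≤ _ := mul_le_mul' le_rfl hDle
  have hmain : ∫⁻ x in Ω, ENNReal.ofReal
      (|Kconv d Ω lam ψ δ u x - u x| ^ p * γ x ^ (-(β + p))) ≤ A * ENNReal.ofReal δ ^ p * I := by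
    refine (setLIntegral_mono' hmeas hpt).trans ?_
    have hCt : ENNReal.ofReal M ^ p * volume (ball (0 : Euc d) 1) ^ (p - 1) *
        ENNReal.ofReal (κ₀ ^ d * κ₀ ^ p) * ENNReal.ofReal δ ^ p ≠ ⊤ := by
      have h1 : volume (ball (0 : Euc d) 1) ≠ ⊤ := measure_ball_lt_top.ne
      have h2 : (0 : ℝ) ≤ p - 1 := by linarith
      exact ENNReal.mul_ne_top (ENNReal.mul_ne_top (ENNReal.mul_ne_top
        (ENNReal.rpow_ne_top_of_nonneg hp0.le ENNReal.ofReal_ne_top)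
        (ENNReal.rpow_ne_top_of_nonneg h2 h1)) ENNReal.ofReal_ne_top)
        (ENNReal.rpow_ne_top_of_nonneg hp0.le ENNReal.ofReal_ne_top)
    rw [lintegral_const_mul' _ _ hCt]
    refine (mul_le_mul' le_rfl hhor).trans_eq ?_
    rw [hA]
    ring
  rw [semiW, hE]
  calc _ ≤ (A * ENNReal.ofReal δ ^ p * I) ^ (1 / p) := ENNReal.rpow_le_rpow hmain (by positivity)
    _ = (A / nC * ENNReal.ofReal δ ^ p * (nC * I)) ^ (1 / p) := by
        congr 1
        calc A * ENNReal.ofReal δ ^ p * I = (A / nC * nC) * ENNReal.ofReal δ ^ p * I := by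
              rw [ENNReal.div_mul_cancel hnC0 hnCt]
          _ = _ := by ring
    _ = (A / nC) ^ (1 / p) * ENNReal.ofReal δ * (nC * I) ^ (1 / p) := by
        rw [ENNReal.mul_rpow_of_nonneg _ _ (by positivity),
          ENNReal.mul_rpow_of_nonneg _ _ (by positivity), ← ENNReal.rpow_mul,
          mul_one_div_cancel hp0.ne', ENNReal.rpow_one]
    _ ≤ _ := by
        rw [ENNReal.ofReal_mul (by positivity)]
        gcongr
        calc (A / nC) ^ (1 / p) = ENNReal.ofReal ((A / nC) ^ (1 / p)).toReal :=
              (ENNReal.ofReal_toReal hBt).symm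
          _ ≤ _ := ENNReal.ofReal_le_ofReal (by linarith)

end
end

section
/- Let d ≥ 1, p ∈ (1,∞), β ∈ ℝ, and κ₁ ≥ 1. Let η, γ : ℝ^d → [0,∞) be Lipschitz with constant κ₁, let ρ : ℝ → [0,∞) be bounded, measurable, even, nonincreasing on [0,∞) and vanishing outside (−1,1), and let δ ∈ (0, 1/(3κ₁)) and τ > 0. Then there exists a constant C, depending only on d, p, β, ρ and κ₁, such that for every continuously differentiable, compactly supported u : ℝ^d → ℝ: ∫_{ℝ^d} ∫_{ℝ^d} 1_{{η(x) < τ}}·1_{{γ(x) ≥ τ}}·ρ(|x−y|/(δτ))·|u(x)−u(y)|^p·γ(x)^{−β}·(δτ)^{−(d+p)} dy dx ≤ C ∫_{{x : η(x) < (1+κ₁δ)τ and γ(x) ≥ (1−κ₁δ)τ}} |∇u(x)|^p γ(x)^{−β} dx. -/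
/-!
Writing `h = δτ` and `y = x + z`, only `‖z‖ < h` contributes. The fundamental theorem of calculus
along the segment from `x` to `x + z` and Jensen's inequality give
`|u(x + z) - u(x)|^p ≤ h^p ∫₀¹ ‖Du(x + tz)‖^p dt`. Every point `w = x + tz` of this segment lies
within `h` of `x`, so the Lipschitz bounds put `w` in the enlarged domain of integration and make
`γ(x)`, `γ(w)` comparable up to a factor `2` (as `κ₁ h ≤ τ / 3 ≤ γ(x) / 3`), hence
`γ(x)^{-β} ≤ 2^{|β|} γ(w)^{-β}`. Tonelli's theorem and translation invariance in `x` then leave the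
right-hand integral times `2^{|β|} M h^{-d} |B_h| = 2^{|β|} M |B_1|`, where `M ≥ ρ`.
-/

open MeasureTheory Metric Set

noncomputable section

lemma rpow_le_two_rpow_abs_mul {a b s : ℝ} (ha : 0 < a) (hb : 0 < b) (hab : a ≤ 2 * b)
    (hba : b ≤ 2 * a) : a ^ s ≤ 2 ^ |s| * b ^ s := by
  rcases le_total 0 s with hs | hs
  · rw [abs_of_nonneg hs, ← Real.mul_rpow (by norm_num) hb.le]
    exact Real.rpow_le_rpow ha.le hab hs
  · rw [abs_of_nonpos hs, Real.rpow_neg (by norm_num), ← Real.inv_rpow (by norm_num),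
      ← Real.mul_rpow (by norm_num) hb.le]
    exact Real.rpow_le_rpow_of_nonpos (by positivity) (by linarith) hs

/-- Fundamental theorem of calculus along a segment combined with Jensen's inequality for the
`p`-th power. -/
lemma ofReal_abs_sub_rpow_le {E : Type*} [NormedAddCommGroup E] [NormedSpace ℝ E]
    {u : E → ℝ} (hu : ContDiff ℝ 1 u) {p : ℝ} (hp : 1 < p) (x z : E) :
    ENNReal.ofReal (|u x - u (x + z)| ^ p) ≤
      ∫⁻ t in Ioc (0 : ℝ) 1, ENNReal.ofReal ((‖fderiv ℝ u (x + t • z)‖ * ‖z‖) ^ p) := by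
  have hp0 : 0 < p := by linarith
  have hcont : Continuous fun t : ℝ => fderiv ℝ u (x + t • z) z :=
    ((hu.continuous_fderiv (by norm_num)).comp (by fun_prop)).clm_apply continuous_const
  have hftc : ∫ t in (0 : ℝ)..1, fderiv ℝ u (x + t • z) z = u (x + z) - u x := by
    have hd : ∀ t ∈ uIcc (0 : ℝ) 1,
        HasDerivAt (fun t : ℝ => u (x + t • z)) (fderiv ℝ u (x + t • z) z) t := by
      intro t _
      have h1 : HasDerivAt (fun t : ℝ => x + t • z) z t := by
        simpa using ((hasDerivAt_id t).smul_const z).const_add x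
      exact ((hu.differentiable (by norm_num)) _).hasFDerivAt.comp_hasDerivAt t h1
    simpa using intervalIntegral.integral_eq_sub_of_hasDerivAt hd (hcont.intervalIntegrable 0 1)
  rw [intervalIntegral.integral_of_le zero_le_one] at hftc
  have hprob : IsProbabilityMeasure (volume.restrict (Ioc (0 : ℝ) 1)) := ⟨by simp⟩
  have hJ := eLpNorm'_le_eLpNorm'_of_exponent_le (μ := volume.restrict (Ioc (0 : ℝ) 1))
    (f := fun t : ℝ => fderiv ℝ u (x + t • z) z) one_pos hp.le hcont.aestronglyMeasurable
  simp only [eLpNorm', ENNReal.rpow_one, div_one] at hJ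
  have h1 : ‖u (x + z) - u x‖ₑ ≤
      (∫⁻ t in Ioc (0 : ℝ) 1, ‖fderiv ℝ u (x + t • z) z‖ₑ ^ p) ^ (1 / p) := by
    rw [← hftc]
    exact (enorm_integral_le_lintegral_enorm _).trans hJ
  have h2 := ENNReal.rpow_le_rpow h1 hp0.le
  rw [← ENNReal.rpow_mul, one_div_mul_cancel hp0.ne', ENNReal.rpow_one] at h2
  calc ENNReal.ofReal (|u x - u (x + z)| ^ p) = ‖u (x + z) - u x‖ₑ ^ p := by
        rw [← ENNReal.ofReal_rpow_of_nonneg (abs_nonneg _) hp0.le, abs_sub_comm,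
          ← Real.norm_eq_abs, ofReal_norm]
    _ ≤ _ := h2
    _ ≤ _ := by
        refine lintegral_mono fun t => ?_
        rw [← ofReal_norm, ENNReal.ofReal_rpow_of_nonneg (norm_nonneg _) hp0.le]
        exact ENNReal.ofReal_le_ofReal
          (Real.rpow_le_rpow (norm_nonneg _) (ContinuousLinearMap.le_opNorm _ _) hp0.le)

/-- Averaging a function over translates, with weight `G`, multiplies its integral by the total
mass of `G`. -/
lemma lintegral_lintegral_translate {d : ℕ} {F G : EuclideanSpace ℝ (Fin d) → ENNReal}
    (hF : Measurable F) (hG : Measurable G) :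
    ∫⁻ x, ∫⁻ z, G z * ∫⁻ t in Ioc (0 : ℝ) 1, F (x + t • z) = (∫⁻ z, G z) * ∫⁻ x, F x := by
  have hm3 : Measurable fun q : (EuclideanSpace ℝ (Fin d) × EuclideanSpace ℝ (Fin d)) × ℝ =>
      F (q.1.1 + q.2 • q.1.2) := hF.comp (by fun_prop)
  have hm2 : Measurable fun q : EuclideanSpace ℝ (Fin d) × EuclideanSpace ℝ (Fin d) =>
      ∫⁻ t in Ioc (0 : ℝ) 1, F (q.1 + t • q.2) := hm3.lintegral_prod_right'
  rw [lintegral_lintegral_swap ((hG.comp measurable_snd).mul hm2).aemeasurable,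
    ← lintegral_mul_const _ hG]
  refine lintegral_congr fun z => ?_
  have hm1 : Measurable fun q : EuclideanSpace ℝ (Fin d) × ℝ => F (q.1 + q.2 • z) :=
    hF.comp (by fun_prop)
  rw [lintegral_const_mul _ hm1.lintegral_prod_right',
    lintegral_lintegral_swap hm1.aemeasurable]
  simp [lintegral_add_right_eq_self]

/-- **Truncated-weight nonlocal-to-local estimate.** There is a constant `C` depending only
on `d, p, β, ρ, κ₁` such that for all `κ₁`-Lipschitz `η, γ : ℝ^d → [0,∞)`, all
`δ ∈ (0,1/(3κ₁))`, `τ > 0`, and every `C¹` compactly supported `u : ℝ^d → ℝ`: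
`∬ 1_{η(x)<τ} 1_{γ(x)≥τ} ρ(|x-y|/(δτ)) |u(x)-u(y)|^p γ(x)^{-β} (δτ)^{-(d+p)} dy dx
  ≤ C ∫_{η(x)<(1+κ₁δ)τ, γ(x)≥(1-κ₁δ)τ} |∇u(x)|^p γ(x)^{-β} dx`. -/
theorem stmt12 (d : ℕ) (hd : 1 ≤ d) (p β κ₁ : ℝ) (hp : 1 < p) (hκ₁ : 1 ≤ κ₁)
    (ρ : ℝ → ℝ) (hρnn : ∀ x, 0 ≤ ρ x) (hρmeas : Measurable ρ)
    (hρbdd : ∃ M : ℝ, ∀ x, ρ x ≤ M) (hρeven : ∀ x, ρ (-x) = ρ x)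
    (hρmono : AntitoneOn ρ (Set.Ici 0)) (hρsupp : ∀ x : ℝ, 1 ≤ |x| → ρ x = 0) :
    ∃ C : ℝ, 0 < C ∧
      ∀ η γ : EuclideanSpace ℝ (Fin d) → ℝ,
        (∀ x, 0 ≤ η x) → LipschitzWith (Real.toNNReal κ₁) η →
        (∀ x, 0 ≤ γ x) → LipschitzWith (Real.toNNReal κ₁) γ →
        ∀ δ τ : ℝ, 0 < δ → δ < 1 / (3 * κ₁) → 0 < τ →
        ∀ u : EuclideanSpace ℝ (Fin d) → ℝ, ContDiff ℝ 1 u → HasCompactSupport u →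
          (∫⁻ x in {x | η x < τ ∧ τ ≤ γ x}, ∫⁻ y,
              ENNReal.ofReal (ρ (‖x - y‖ / (δ * τ)) * |u x - u y| ^ p * γ x ^ (-β) /
                (δ * τ) ^ ((d : ℝ) + p))) ≤
            ENNReal.ofReal C *
              ∫⁻ x in {x | η x < (1 + κ₁ * δ) * τ ∧ (1 - κ₁ * δ) * τ ≤ γ x},
                ENNReal.ofReal (‖fderiv ℝ u x‖ ^ p * γ x ^ (-β)) := by
  obtain ⟨M₀, hM₀⟩ := hρbdd
  -- The maximum with `1` keeps the final constant positive even when `ρ` vanishes identically.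
  set M : ℝ := max M₀ 1
  have hM : ∀ x, ρ x ≤ M := fun x => (hM₀ x).trans (le_max_left _ _)
  have hMpos : 0 < M := lt_of_lt_of_le one_pos (le_max_right _ _)
  set V : ENNReal := volume (ball (0 : EuclideanSpace ℝ (Fin d)) 1)
  have hVpos : 0 < V.toReal :=
    ENNReal.toReal_pos (measure_ball_pos _ _ one_pos).ne' measure_ball_lt_top.ne
  have hV : ENNReal.ofReal V.toReal = V := ENNReal.ofReal_toReal measure_ball_lt_top.ne
  have hp0 : 0 < p := by linarith
  have hκ0 : 0 < κ₁ := by linarith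
  refine ⟨M * 2 ^ |β| * V.toReal, by positivity, ?_⟩
  intro η γ hη0 hη hγ0 hγ δ τ hδ hδ' hτ u hu _
  have hκδ : κ₁ * δ < 1 / 3 := by
    rw [lt_div_iff₀ (by positivity)] at hδ'
    linarith
  set h : ℝ := δ * τ with hh
  have hh0 : 0 < h := mul_pos hδ hτ
  have hκh : κ₁ * h = κ₁ * δ * τ := by rw [hh]; ring
  have hκh' : κ₁ * h ≤ τ / 3 := by rw [hκh]; nlinarith
  have hηd : ∀ x w, ‖x - w‖ ≤ h → |η x - η w| ≤ κ₁ * h := fun x w hxw => by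
    have := hη.dist_le_mul x w
    rw [Real.dist_eq, dist_eq_norm, Real.coe_toNNReal _ hκ0.le] at this
    exact this.trans (by gcongr)
  have hγd : ∀ x w, ‖x - w‖ ≤ h → |γ x - γ w| ≤ κ₁ * h := fun x w hxw => by
    have := hγ.dist_le_mul x w
    rw [Real.dist_eq, dist_eq_norm, Real.coe_toNNReal _ hκ0.le] at this
    exact this.trans (by gcongr)
  have hAm : MeasurableSet {x | η x < τ ∧ τ ≤ γ x} :=
    (measurableSet_lt hη.continuous.measurable measurable_const).inter
      (measurableSet_le measurable_const hγ.continuous.measurable)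
  set B := {x | η x < (1 + κ₁ * δ) * τ ∧ (1 - κ₁ * δ) * τ ≤ γ x} with hB
  have hBm : MeasurableSet B :=
    (measurableSet_lt hη.continuous.measurable measurable_const).inter
      (measurableSet_le measurable_const hγ.continuous.measurable)
  set F₀ : EuclideanSpace ℝ (Fin d) → ENNReal :=
    fun x => ENNReal.ofReal (‖fderiv ℝ u x‖ ^ p * γ x ^ (-β)) with hF₀
  have hF₀m : Measurable F₀ :=
    ((((hu.continuous_fderiv (by norm_num)).norm.measurable).pow_const p).mul
      (hγ.continuous.measurable.pow_const (-β))).ennreal_ofReal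
  set F := B.indicator F₀ with hF
  have hFm : Measurable F := hF₀m.indicator hBm
  set c : ℝ := M * 2 ^ |β| / h ^ d with hc
  have hc0 : 0 < c := by positivity
  set G : EuclideanSpace ℝ (Fin d) → ENNReal :=
    (ball 0 h).indicator fun _ => ENNReal.ofReal c with hG
  have hGm : Measurable G := measurable_const.indicator measurableSet_ball
  have hGint : ∫⁻ z, G z = ENNReal.ofReal (M * 2 ^ |β| * V.toReal) := by
    rw [hG, lintegral_indicator measurableSet_ball, setLIntegral_const,
      Measure.addHaar_ball_of_pos _ _ hh0, finrank_euclideanSpace_fin]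
    change ENNReal.ofReal c * (ENNReal.ofReal (h ^ d) * V) = _
    rw [← hV, ← ENNReal.ofReal_mul (by positivity), ← ENNReal.ofReal_mul hc0.le,
      ENNReal.toReal_ofReal hVpos.le]
    congr 1
    rw [hc]
    field_simp
  have key : ∀ x, η x < τ ∧ τ ≤ γ x → ∀ z,
      ENNReal.ofReal (ρ (‖x - (x + z)‖ / h) * |u x - u (x + z)| ^ p * γ x ^ (-β) /
        h ^ ((d : ℝ) + p)) ≤ G z * ∫⁻ t in Ioc (0 : ℝ) 1, F (x + t • z) := by
    rintro x ⟨hx1, hx2⟩ z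
    have hxz : ‖x - (x + z)‖ = ‖z‖ := by rw [sub_add_cancel_left, norm_neg]
    rw [hxz]
    rcases le_or_gt h ‖z‖ with hz | hz
    · have : ρ (‖z‖ / h) = 0 := by
        apply hρsupp
        rw [abs_of_nonneg (by positivity), le_div_iff₀ hh0]
        linarith
      simp [this]
    have hGz : G z = ENNReal.ofReal c := by
      rw [hG, indicator_of_mem]
      simpa using hz
    have hγx : 0 < γ x := by linarith
    set a : ℝ := ρ (‖z‖ / h) * γ x ^ (-β) / h ^ ((d : ℝ) + p) with ha
    have ha0 : 0 ≤ a := by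
      have := hρnn (‖z‖ / h)
      positivity
    have e1 : ρ (‖z‖ / h) * |u x - u (x + z)| ^ p * γ x ^ (-β) / h ^ ((d : ℝ) + p) =
        a * |u x - u (x + z)| ^ p := by rw [ha]; ring
    rw [e1, ENNReal.ofReal_mul ha0, hGz]
    refine (mul_le_mul_right (ofReal_abs_sub_rpow_le hu hp x z) _).trans ?_
    rw [← lintegral_const_mul' _ _ ENNReal.ofReal_ne_top,
      ← lintegral_const_mul' _ _ ENNReal.ofReal_ne_top]
    refine setLIntegral_mono' measurableSet_Ioc fun t ht => ?_
    set w := x + t • z with hw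
    have hxw : ‖x - w‖ ≤ h := by
      rw [hw, sub_add_cancel_left, norm_neg, norm_smul, Real.norm_of_nonneg ht.1.le]
      nlinarith [norm_nonneg z, ht.2]
    have h1 := abs_le.1 (hηd x w hxw)
    have h2 := abs_le.1 (hγd x w hxw)
    have hwB : w ∈ B := by
      constructor <;> nlinarith
    have hγw : 0 < γ w := by linarith
    rw [hF, indicator_of_mem hwB, hF₀, ← ENNReal.ofReal_mul ha0, ← ENNReal.ofReal_mul hc0.le]
    apply ENNReal.ofReal_le_ofReal
    have hcomp : γ x ^ (-β) ≤ 2 ^ |β| * γ w ^ (-β) := by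
      simpa using rpow_le_two_rpow_abs_mul (s := -β) hγx hγw (by linarith) (by linarith)
    have hhp : (‖fderiv ℝ u w‖ * ‖z‖) ^ p ≤ ‖fderiv ℝ u w‖ ^ p * h ^ p := by
      rw [← Real.mul_rpow (norm_nonneg _) hh0.le]
      exact Real.rpow_le_rpow (by positivity) (by gcongr) hp0.le
    have hah : a * h ^ p ≤ c * γ w ^ (-β) := by
      have : a * h ^ p = ρ (‖z‖ / h) * γ x ^ (-β) / h ^ d := by
        rw [ha, Real.rpow_add hh0, Real.rpow_natCast]
        field_simp
      rw [this, hc, div_mul_eq_mul_div, mul_assoc]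
      gcongr
      exact hM _
    calc a * (‖fderiv ℝ u w‖ * ‖z‖) ^ p ≤ a * (‖fderiv ℝ u w‖ ^ p * h ^ p) := by gcongr
      _ = ‖fderiv ℝ u w‖ ^ p * (a * h ^ p) := by ring
      _ ≤ ‖fderiv ℝ u w‖ ^ p * (c * γ w ^ (-β)) := by gcongr
      _ = c * (‖fderiv ℝ u w‖ ^ p * γ w ^ (-β)) := by ring
  calc _ ≤ ∫⁻ x in {x | η x < τ ∧ τ ≤ γ x}, ∫⁻ z, G z * ∫⁻ t in Ioc (0 : ℝ) 1, F (x + t • z) := by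
        refine setLIntegral_mono' hAm fun x hx => ?_
        rw [← lintegral_add_left_eq_self _ x]
        exact lintegral_mono (key x hx)
    _ ≤ ∫⁻ x, ∫⁻ z, G z * ∫⁻ t in Ioc (0 : ℝ) 1, F (x + t • z) := setLIntegral_le_lintegral _ _
    _ = _ := by
        rw [lintegral_lintegral_translate hFm hGm, hGint, hF, lintegral_indicator hBm]

end
end
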